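/- For all φ₁, φ₂ ∈ ℝ, the function θ ↦ log(cos²(θ − φ₁))·log(cos²(θ − φ₂)) is integrable on (0, 2π) and (1/(4π))·∫₀^{2π} log(cos²(θ − φ₁))·log(cos²(θ − φ₂)) dθ = 2·(log 2)² + Σ_{k=1}^∞ cos(2k(φ₂ − φ₁))/k². -/

import Mathlib

/-!
Since `|1 + e^{2iy}|² = 4 cos² y`, the function `log cos²(θ - φ)` is the boundary value at `r = 1` of
`regLog r φ θ = log (|1 + r e^{2i(θ-φ)}|² / 4)`. For `0 < r < 1` the Taylor series of `log (1 + z)`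
expands `regLog r φ` as an absolutely convergent cosine series with constant term `-2 log 2` and
further coefficients `2 (-1)^(n+1) r^n / n` (`hasSum_regLog`). Orthogonality of the cosines on
`(0, 2π)` then evaluates `∫ regLog r φ₁ * regLog r φ₂` as a series whose terms are bounded, uniformly
in `r`, by a multiple of `1 / n²` (`hasSum_integral_regLog_mul`).

Letting `r → 1` gives the claim. With `φ₁ = φ₂` the uniform bound and Fatou's lemma show that
`log cos²` is square integrable (`memLp_regLog_one`), hence that the product is integrable. The
identity `|1 + r e^{2iy}|² / 4 = r cos² y + (1 - r)² / 4` bounds `|regLog r φ|` by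
`log 2 + |log cos²|` for `1/2 ≤ r < 1`, so dominated convergence applies to the integrals, while the
series converge by domination with `1 / n²` (`integral_regLog_one_mul`).
-/

open MeasureTheory Real

open Filter Topology

/-- The regularised function `θ ↦ log (|1 + r e^{2i(θ-φ)}|² / 4)`;
for `r = 1` it is `log (cos² (θ-φ))`. -/
noncomputable def regLog (r φ θ : ℝ) : ℝ :=
  Real.log ((1 + 2 * r * Real.cos (2 * (θ - φ)) + r ^ 2) / 4)

/-- The `n`-th cosine coefficient of `regLog r φ` in the variable `2(θ-φ)`. -/
noncomputable def regCoeff (r : ℝ) (n : ℕ) : ℝ :=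
  if n = 0 then -(2 * Real.log 2) else 2 * (-1) ^ (n + 1) * r ^ n / n

/-- The squared norm of `θ ↦ cos (2nθ)` in `L²(0, 2π)`. -/
noncomputable def cosWeight (n : ℕ) : ℝ := if n = 0 then 2 * π else π

lemma regLog_one (φ θ : ℝ) : regLog 1 φ θ = Real.log ((Real.cos (θ - φ)) ^ 2) := by
  unfold regLog
  congr 1
  rw [Real.cos_two_mul]
  ring

lemma regLog_arg_ge (r x : ℝ) :
    r * Real.cos x ^ 2 ≤ (1 + 2 * r * Real.cos (2 * x) + r ^ 2) / 4 := by
  rw [Real.cos_two_mul]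
  nlinarith [sq_nonneg (1 - r)]

lemma regLog_arg_pos {r : ℝ} (h0 : 0 < r) (h1 : r < 1) (y : ℝ) :
    0 < (1 + 2 * r * Real.cos y + r ^ 2) / 4 := by
  have := Real.neg_one_le_cos y
  nlinarith [sq_pos_of_pos (sub_pos.2 h1)]

lemma regLog_arg_le {r : ℝ} (h0 : 0 < r) (h1 : r < 1) (y : ℝ) :
    (1 + 2 * r * Real.cos y + r ^ 2) / 4 ≤ 1 := by
  have := Real.cos_le_one y
  nlinarith

lemma continuous_regLog {r : ℝ} (h0 : 0 < r) (h1 : r < 1) (φ : ℝ) : Continuous (regLog r φ) := by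
  unfold regLog
  exact Continuous.log (by fun_prop) fun x => ne_of_gt (regLog_arg_pos h0 h1 _)

/-- Real part of the Taylor series of `log (1 + z)` at `z = r e^{2i(θ-φ)}`. -/
lemma hasSum_regLog {r : ℝ} (h0 : 0 < r) (h1 : r < 1) (φ θ : ℝ) :
    HasSum (fun n : ℕ => regCoeff r n * Real.cos (2 * n * (θ - φ))) (regLog r φ θ) := by
  set y := 2 * (θ - φ) with hy
  set z : ℂ := r * Complex.exp (y * Complex.I) with hz
  have hnorm : ‖z‖ < 1 := by
    rw [hz, norm_mul, Complex.norm_exp_ofReal_mul_I, mul_one, Complex.norm_real,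
      Real.norm_of_nonneg h0.le]
    exact h1
  have hS := (Complex.hasSum_re (Complex.hasSum_taylorSeries_log hnorm)).mul_left 2
  have hsq : Complex.normSq (1 + z) = 1 + 2 * r * Real.cos y + r ^ 2 := by
    rw [Complex.normSq_apply, hz]
    simp only [Complex.add_re, Complex.add_im, Complex.one_re, Complex.one_im,
      Complex.re_ofReal_mul, Complex.im_ofReal_mul, Complex.exp_ofReal_mul_I_re,
      Complex.exp_ofReal_mul_I_im]
    nlinarith [Real.sin_sq_add_cos_sq y]
  have hval : regLog r φ θ = -(2 * Real.log 2) + 2 * (Complex.log (1 + z)).re := by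
    have hp := regLog_arg_pos h0 h1 y
    have h4 : Real.log 4 = 2 * Real.log 2 := by
      rw [show (4 : ℝ) = 2 ^ 2 by norm_num, Real.log_pow]; norm_num
    rw [Complex.log_re, show regLog r φ θ = Real.log ((1 + 2 * r * Real.cos y + r ^ 2) / 4) from rfl,
      Real.log_div (by linarith) (by norm_num), ← hsq, Complex.normSq_eq_norm_sq, Real.log_pow, h4]
    push_cast; ring
  rw [hval]
  have h2 := (hasSum_ite_eq (0 : ℕ) (-(2 * Real.log 2))).add hS
  convert! h2 using 2 with n
  have hzn : ((-1 : ℂ) ^ (n + 1) * z ^ n / n).re = (-1) ^ (n + 1) * r ^ n / n * Real.cos (n * y) := by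
    have : (-1 : ℂ) ^ (n + 1) * z ^ n / n
        = ((((-1) ^ (n + 1) * r ^ n / n : ℝ)) : ℂ) * Complex.exp (((n * y : ℝ) : ℂ) * Complex.I) := by
      rw [hz, mul_pow, ← Complex.exp_nat_mul]
      push_cast
      ring_nf
    rw [this, Complex.re_ofReal_mul, Complex.exp_ofReal_mul_I_re]
  rw [hzn]
  unfold regCoeff
  rw [show 2 * (n : ℝ) * (θ - φ) = n * y by rw [hy]; ring]
  split_ifs with hn
  · subst hn; simp
  · ring

lemma summable_regCoeff {r : ℝ} (h0 : 0 < r) (h1 : r < 1) : Summable fun n => |regCoeff r n| := by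
  refine (Summable.add (f := fun n : ℕ => if n = 0 then |2 * Real.log 2| else 0)
    (g := fun n : ℕ => 2 * r ^ n) (hasSum_ite_eq (0 : ℕ) _).summable
    ((summable_geometric_of_lt_one h0.le h1).mul_left 2)).of_nonneg_of_le
    (fun n => abs_nonneg _) fun n => ?_
  unfold regCoeff
  split_ifs with hn
  · rw [abs_neg]
    have : 0 ≤ 2 * r ^ n := by positivity
    linarith
  · have hn1 : (1 : ℝ) ≤ n := by exact_mod_cast Nat.one_le_iff_ne_zero.2 hn
    rw [abs_div, abs_mul, abs_mul, abs_pow, abs_pow, abs_neg, abs_one, one_pow, abs_of_pos h0,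
      zero_add, Nat.abs_cast, abs_two, mul_one]
    exact div_le_self (by positivity) hn1

lemma integral_cos_int_mul_add (k : ℤ) (a : ℝ) :
    ∫ x in (0 : ℝ)..(2 * π), Real.cos (k * x + a) = if k = 0 then 2 * π * Real.cos a else 0 := by
  split_ifs with hk
  · simp [hk]
  · have hk' : (k : ℝ) ≠ 0 := by exact_mod_cast hk
    rw [intervalIntegral.integral_comp_mul_add (fun x => Real.cos x) hk', integral_cos,
      show (k : ℝ) * (2 * π) + a = a + k * (2 * π) by ring, Real.sin_add_int_mul_two_pi]
    simp

lemma integral_cos_mul_cos (φ₁ φ₂ : ℝ) (n m : ℕ) :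
    ∫ x in (0 : ℝ)..(2 * π), Real.cos (2 * n * (x - φ₁)) * Real.cos (2 * m * (x - φ₂))
      = if m = n then cosWeight n * Real.cos (2 * n * (φ₂ - φ₁)) else 0 := by
  have hprod : ∀ x : ℝ, Real.cos (2 * n * (x - φ₁)) * Real.cos (2 * m * (x - φ₂))
      = (1 / 2) * (Real.cos (((2 * n - 2 * m : ℤ) : ℝ) * x + (2 * m * φ₂ - 2 * n * φ₁))
        + Real.cos (((2 * n + 2 * m : ℤ) : ℝ) * x + (-(2 * m * φ₂) - 2 * n * φ₁))) := by
    intro x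
    have h1 := Real.cos_sub (2 * n * (x - φ₁)) (2 * m * (x - φ₂))
    have h2 := Real.cos_add (2 * n * (x - φ₁)) (2 * m * (x - φ₂))
    push_cast
    rw [show (2 * (n : ℝ) - 2 * m) * x + (2 * m * φ₂ - 2 * n * φ₁)
        = 2 * n * (x - φ₁) - 2 * m * (x - φ₂) by ring,
      show (2 * (n : ℝ) + 2 * m) * x + (-(2 * m * φ₂) - 2 * n * φ₁)
        = 2 * n * (x - φ₁) + 2 * m * (x - φ₂) by ring, h1, h2]
    ring
  simp_rw [hprod]
  rw [intervalIntegral.integral_const_mul, intervalIntegral.integral_add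
    (Continuous.intervalIntegrable (by fun_prop) _ _)
    (Continuous.intervalIntegrable (by fun_prop) _ _),
    integral_cos_int_mul_add, integral_cos_int_mul_add]
  unfold cosWeight
  by_cases hmn : m = n
  · subst hmn
    by_cases hm : m = 0
    · subst hm; simp; ring
    · have : ¬ (2 * (m : ℤ) + 2 * m = 0) := by omega
      simp only [this, hm, if_true, if_false, sub_self]
      rw [show 2 * (m : ℝ) * φ₂ - 2 * m * φ₁ = 2 * m * (φ₂ - φ₁) by ring]
      ring
  · have h1 : ¬ (2 * (n : ℤ) - 2 * m = 0) := by omega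
    have h2 : ¬ (2 * (n : ℤ) + 2 * m = 0) := by omega
    simp [h1, h2, hmn]

/-- Termwise integration of an absolutely convergent cosine series against a continuous function. -/
lemma hasSum_integral_cosSeries_mul {c : ℕ → ℝ} (hc : Summable fun n => |c n|) {φ : ℝ} {g h : ℝ → ℝ}
    (hg : ∀ x, HasSum (fun n : ℕ => c n * Real.cos (2 * n * (x - φ))) (g x)) (hh : Continuous h) :
    HasSum (fun n : ℕ => c n * ∫ x in (0 : ℝ)..(2 * π), Real.cos (2 * n * (x - φ)) * h x)
      (∫ x in (0 : ℝ)..(2 * π), g x * h x) := by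
  simp_rw [← intervalIntegral.integral_const_mul]
  refine intervalIntegral.hasSum_integral_of_dominated_convergence (fun n x => |c n| * |h x|)
    (fun n => ?_) (fun n => ?_) ?_ ?_ ?_
  · exact Continuous.aestronglyMeasurable (by fun_prop)
  · refine .of_forall fun x _ => ?_
    rw [Real.norm_eq_abs, abs_mul, abs_mul]
    gcongr
    exact mul_le_of_le_one_left (abs_nonneg _) (Real.abs_cos_le_one _)
  · exact .of_forall fun x _ => hc.mul_right _
  · simp_rw [tsum_mul_right]
    exact Continuous.intervalIntegrable (by fun_prop) _ _
  · refine .of_forall fun x _ => ?_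
    simpa only [mul_assoc] using (hg x).mul_right (h x)

/-- Parseval's identity for two shifted regularised logarithms. -/
lemma hasSum_integral_regLog_mul {r : ℝ} (h0 : 0 < r) (h1 : r < 1) (φ₁ φ₂ : ℝ) :
    HasSum (fun n : ℕ => regCoeff r n ^ 2 * cosWeight n * Real.cos (2 * n * (φ₂ - φ₁)))
      (∫ x in (0 : ℝ)..(2 * π), regLog r φ₁ x * regLog r φ₂ x) := by
  have hc := summable_regCoeff h0 h1
  convert! hasSum_integral_cosSeries_mul hc (hasSum_regLog h0 h1 φ₁) (continuous_regLog h0 h1 φ₂)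
    using 2 with n
  have h2 := hasSum_integral_cosSeries_mul hc (hasSum_regLog h0 h1 φ₂)
    (h := fun x => Real.cos (2 * n * (x - φ₁))) (by fun_prop)
  have h3 : ∀ m : ℕ, (∫ x in (0 : ℝ)..(2 * π),
      Real.cos (2 * m * (x - φ₂)) * Real.cos (2 * n * (x - φ₁)))
      = if m = n then cosWeight n * Real.cos (2 * n * (φ₂ - φ₁)) else 0 := by
    intro m
    rw [← integral_cos_mul_cos]
    simp_rw [mul_comm]
  simp_rw [h3] at h2
  have h4 : HasSum (fun m : ℕ => regCoeff r m *
      if m = n then cosWeight n * Real.cos (2 * n * (φ₂ - φ₁)) else 0)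
      (regCoeff r n * (cosWeight n * Real.cos (2 * n * (φ₂ - φ₁)))) := by
    convert! hasSum_single (f := fun m : ℕ => regCoeff r m *
      if m = n then cosWeight n * Real.cos (2 * n * (φ₂ - φ₁)) else 0) n ?_ using 1
    · simp
    · intro m hm; simp [hm]
  have h5 : (∫ x in (0 : ℝ)..(2 * π), Real.cos (2 * n * (x - φ₁)) * regLog r φ₂ x)
      = regCoeff r n * (cosWeight n * Real.cos (2 * n * (φ₂ - φ₁))) := by
    rw [← h2.unique h4]
    simp_rw [mul_comm]
  rw [h5]
  ring

lemma summable_regCoeff_one_sq : Summable fun n => regCoeff 1 n ^ 2 * cosWeight n := by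
  rw [← summable_nat_add_iff 1]
  have h := ((summable_nat_add_iff 1).2
    (Real.summable_one_div_nat_pow.2 (one_lt_two))).mul_left (4 * π)
  refine h.congr fun n => ?_
  have hs : ((-1 : ℝ) ^ (n + 1 + 1)) ^ 2 = 1 := by
    rw [← pow_mul, mul_comm, pow_mul]; norm_num
  simp only [regCoeff, cosWeight, Nat.add_eq_zero_iff, one_ne_zero, and_false, if_false, one_pow,
    div_pow, mul_pow, hs]
  ring

lemma norm_parseval_term_le {r : ℝ} (h0 : 0 < r) (h1 : r < 1) (n : ℕ) (t : ℝ) :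
    ‖regCoeff r n ^ 2 * cosWeight n * Real.cos t‖ ≤ regCoeff 1 n ^ 2 * cosWeight n := by
  have hw : 0 ≤ cosWeight n := by unfold cosWeight; split_ifs <;> positivity
  have hc : regCoeff r n ^ 2 ≤ regCoeff 1 n ^ 2 := by
    rw [sq_le_sq]
    unfold regCoeff
    split_ifs
    · rfl
    · rw [abs_div, abs_div, abs_mul, abs_mul _ ((1 : ℝ) ^ n), one_pow, abs_pow r, abs_of_pos h0,
        abs_one]
      gcongr
      exact pow_le_one₀ h0.le h1.le
  rw [Real.norm_eq_abs, abs_mul, abs_of_nonneg (mul_nonneg (sq_nonneg _) hw)]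
  exact (mul_le_of_le_one_right (mul_nonneg (sq_nonneg _) hw) (Real.abs_cos_le_one _)).trans
    (mul_le_mul_of_nonneg_right hc hw)

/-- A sequence of radii in `[1/2, 1)` increasing to `1`. -/
noncomputable def radius (j : ℕ) : ℝ := 1 - 1 / ((j : ℝ) + 2)

lemma half_le_radius (j : ℕ) : 1 / 2 ≤ radius j := by
  have : 1 / ((j : ℝ) + 2) ≤ 1 / 2 := by gcongr; linarith [Nat.cast_nonneg (α := ℝ) j]
  unfold radius; linarith

lemma radius_pos (j : ℕ) : 0 < radius j := by linarith [half_le_radius j]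

lemma radius_lt_one (j : ℕ) : radius j < 1 := by
  have : 0 < 1 / ((j : ℝ) + 2) := by positivity
  unfold radius; linarith

lemma tendsto_radius : Tendsto radius atTop (𝓝 1) := by
  have h : Tendsto (fun j : ℕ => 1 / ((j : ℝ) + 2)) atTop (𝓝 0) :=
    tendsto_const_nhds.div_atTop (tendsto_atTop_add_const_right _ _ tendsto_natCast_atTop_atTop)
  have h1 := h.const_sub (1 : ℝ)
  rw [sub_zero] at h1
  exact h1

lemma ae_cos_sub_ne_zero (φ : ℝ) : ∀ᵐ x : ℝ, Real.cos (x - φ) ≠ 0 := by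
  have : {x : ℝ | ¬ Real.cos (x - φ) ≠ 0} ⊆ Set.range fun k : ℤ => (2 * (k : ℝ) + 1) * π / 2 + φ := by
    intro x hx
    obtain ⟨k, hk⟩ := Real.cos_eq_zero_iff.1 (not_not.1 hx)
    exact ⟨k, by simp only; linarith⟩
  exact ((Set.countable_range _).mono this).measure_zero volume

lemma tendsto_regLog {φ x : ℝ} (hx : Real.cos (x - φ) ≠ 0) :
    Tendsto (fun j => regLog (radius j) φ x) atTop (𝓝 (regLog 1 φ x)) := by
  have hp : 0 < (1 + 2 * 1 * Real.cos (2 * (x - φ)) + 1 ^ 2) / 4 := by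
    have := regLog_arg_ge 1 (x - φ)
    have : 0 < Real.cos (x - φ) ^ 2 := by positivity
    linarith
  unfold regLog
  refine Tendsto.log ?_ hp.ne'
  exact (Continuous.tendsto (f := fun r : ℝ => (1 + 2 * r * Real.cos (2 * (x - φ)) + r ^ 2) / 4)
    (by fun_prop) 1).comp tendsto_radius

/-- The domination is uniform in the radius because
`|1 + r e^{2iy}|² / 4 = r cos² y + (1 - r)² / 4`. -/
lemma abs_regLog_le {φ x : ℝ} (hx : Real.cos (x - φ) ≠ 0) (j : ℕ) :
    |regLog (radius j) φ x| ≤ Real.log 2 + |regLog 1 φ x| := by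
  have h0 := radius_pos j
  have hc : 0 < Real.cos (x - φ) ^ 2 := by positivity
  have hle : regLog (radius j) φ x ≤ 0 :=
    Real.log_nonpos (regLog_arg_pos h0 (radius_lt_one j) _).le (regLog_arg_le h0 (radius_lt_one j) _)
  have hge : Real.log (radius j * Real.cos (x - φ) ^ 2) ≤ regLog (radius j) φ x :=
    Real.log_le_log (by positivity) (regLog_arg_ge _ _)
  rw [Real.log_mul h0.ne' hc.ne', ← regLog_one] at hge
  have hr : -Real.log 2 ≤ Real.log (radius j) := by
    rw [← Real.log_inv]
    exact Real.log_le_log (by norm_num) (by linarith [half_le_radius j])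
  rw [abs_of_nonpos hle]
  linarith [neg_abs_le (regLog 1 φ x)]

lemma measurable_regLog (r φ : ℝ) : Measurable (regLog r φ) := by
  unfold regLog
  fun_prop

/-- Square integrability of `log cos²`, by Fatou's lemma: the `L²` norms of the regularisations are
bounded through Parseval. -/
lemma memLp_regLog_one (φ : ℝ) :
    MemLp (regLog 1 φ) 2 (volume.restrict (Set.Ioc 0 (2 * π))) := by
  rw [memLp_two_iff_integrable_sq (measurable_regLog 1 φ).aestronglyMeasurable]
  refine integrable_of_tendsto (G := fun j x => regLog (radius j) φ x ^ 2) ?_ (fun j => ?_) ?_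
  · filter_upwards [ae_restrict_of_ae (ae_cos_sub_ne_zero φ)] with x hx
    exact (tendsto_regLog hx).pow 2
  · exact ((measurable_regLog _ φ).pow_const 2).aestronglyMeasurable
  · refine ne_top_of_le_ne_top (b := ENNReal.ofReal (∑' n, regCoeff 1 n ^ 2 * cosWeight n))
      ENNReal.ofReal_ne_top (liminf_le_of_frequently_le' (.of_forall fun j => ?_))
    have hcont := continuous_regLog (radius_pos j) (radius_lt_one j) φ
    have hint : Integrable (fun x => regLog (radius j) φ x ^ 2)
        (volume.restrict (Set.Ioc 0 (2 * π))) :=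
      ((hcont.pow 2).integrableOn_Icc (a := 0) (b := 2 * π)).mono_set Set.Ioc_subset_Icc_self
    simp_rw [Real.enorm_of_nonneg (sq_nonneg (regLog (radius j) φ _))]
    rw [← ofReal_integral_eq_lintegral_ofReal hint (.of_forall fun x => sq_nonneg _)]
    refine ENNReal.ofReal_le_ofReal ?_
    have hP := hasSum_integral_regLog_mul (radius_pos j) (radius_lt_one j) φ φ
    rw [intervalIntegral.integral_of_le (by positivity)] at hP
    simp_rw [← sq] at hP
    rw [← hP.tsum_eq]
    exact hP.summable.tsum_le_tsum
      (fun n => (le_abs_self _).trans (norm_parseval_term_le (radius_pos j) (radius_lt_one j) n _))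
      summable_regCoeff_one_sq

/-- The limit `r → 1` of Parseval's identity, taken on both sides by dominated convergence. -/
lemma integral_regLog_one_mul (φ₁ φ₂ : ℝ) :
    ∫ x in (0 : ℝ)..(2 * π), regLog 1 φ₁ x * regLog 1 φ₂ x
      = ∑' n : ℕ, regCoeff 1 n ^ 2 * cosWeight n * Real.cos (2 * n * (φ₂ - φ₁)) := by
  have hI : Tendsto (fun j => ∫ x in (0 : ℝ)..(2 * π),
      regLog (radius j) φ₁ x * regLog (radius j) φ₂ x) atTop
      (𝓝 (∫ x in (0 : ℝ)..(2 * π), regLog 1 φ₁ x * regLog 1 φ₂ x)) := by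
    simp_rw [intervalIntegral.integral_of_le (show (0 : ℝ) ≤ 2 * π by positivity)]
    have hb : ∀ φ, MemLp (fun x => Real.log 2 + |regLog 1 φ x|) 2
        (volume.restrict (Set.Ioc 0 (2 * π))) := by
      intro φ
      have h := (memLp_regLog_one φ).norm
      simp only [Real.norm_eq_abs] at h
      exact (memLp_const (Real.log 2)).add h
    refine tendsto_integral_of_dominated_convergence
      (fun x => (Real.log 2 + |regLog 1 φ₁ x|) * (Real.log 2 + |regLog 1 φ₂ x|))
      (fun j => ((measurable_regLog _ _).mul (measurable_regLog _ _)).aestronglyMeasurable)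
      ((hb φ₁).integrable_mul (hb φ₂)) (fun j => ?_) ?_
    · filter_upwards [ae_restrict_of_ae (ae_cos_sub_ne_zero φ₁),
        ae_restrict_of_ae (ae_cos_sub_ne_zero φ₂)] with x hx₁ hx₂
      rw [Real.norm_eq_abs, abs_mul]
      exact mul_le_mul (abs_regLog_le hx₁ j) (abs_regLog_le hx₂ j) (abs_nonneg _)
        ((abs_nonneg _).trans (abs_regLog_le hx₁ j))
    · filter_upwards [ae_restrict_of_ae (ae_cos_sub_ne_zero φ₁),
        ae_restrict_of_ae (ae_cos_sub_ne_zero φ₂)] with x hx₁ hx₂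
      exact (tendsto_regLog hx₁).mul (tendsto_regLog hx₂)
  have hS : Tendsto (fun j => ∑' n : ℕ,
      regCoeff (radius j) n ^ 2 * cosWeight n * Real.cos (2 * n * (φ₂ - φ₁))) atTop
      (𝓝 (∑' n : ℕ, regCoeff 1 n ^ 2 * cosWeight n * Real.cos (2 * n * (φ₂ - φ₁)))) := by
    refine tendsto_tsum_of_dominated_convergence summable_regCoeff_one_sq (fun n => ?_)
      (.of_forall fun j n => norm_parseval_term_le (radius_pos j) (radius_lt_one j) n _)
    refine (Continuous.tendsto (f := fun r : ℝ =>
      regCoeff r n ^ 2 * cosWeight n * Real.cos (2 * n * (φ₂ - φ₁))) ?_ 1).comp tendsto_radius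
    unfold regCoeff
    split_ifs <;> fun_prop
  refine tendsto_nhds_unique hI (hS.congr fun j => ?_)
  exact (hasSum_integral_regLog_mul (radius_pos j) (radius_lt_one j) φ₁ φ₂).tsum_eq

/-- For all `φ₁, φ₂ ∈ ℝ`, `θ ↦ log cos²(θ-φ₁) · log cos²(θ-φ₂)` is
integrable on `(0, 2π)` and
`(1/(4π))·∫₀^{2π} log cos²(θ-φ₁) log cos²(θ-φ₂) dθ = 2(log 2)² + Σ_{k≥1} cos(2k(φ₂-φ₁))/k²`. -/
theorem stmt18 (φ₁ φ₂ : ℝ) :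
    IntegrableOn (fun θ : ℝ =>
        Real.log ((Real.cos (θ - φ₁)) ^ 2) * Real.log ((Real.cos (θ - φ₂)) ^ 2))
      (Set.Ioo 0 (2 * π)) ∧
    (1 / (4 * π)) * ∫ θ in Set.Ioo (0 : ℝ) (2 * π),
        Real.log ((Real.cos (θ - φ₁)) ^ 2) * Real.log ((Real.cos (θ - φ₂)) ^ 2)
      = 2 * (Real.log 2) ^ 2
        + ∑' k : ℕ, Real.cos (2 * ((k : ℝ) + 1) * (φ₂ - φ₁)) / ((k : ℝ) + 1) ^ 2 := by
  simp_rw [← regLog_one]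
  constructor
  · have h : IntegrableOn (fun θ => regLog 1 φ₁ θ * regLog 1 φ₂ θ) (Set.Ioc 0 (2 * π)) :=
      (memLp_regLog_one φ₁).integrable_mul (memLp_regLog_one φ₂)
    exact h.mono_set Set.Ioo_subset_Ioc_self
  · rw [← integral_Ioc_eq_integral_Ioo, ← intervalIntegral.integral_of_le (by positivity),
      integral_regLog_one_mul]
    have hs : Summable fun n : ℕ =>
        regCoeff 1 n ^ 2 * cosWeight n * Real.cos (2 * n * (φ₂ - φ₁)) := by
      refine summable_regCoeff_one_sq.of_norm_bounded fun n => ?_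
      have hw : 0 ≤ cosWeight n := by unfold cosWeight; split_ifs <;> positivity
      rw [Real.norm_eq_abs, abs_mul, abs_of_nonneg (mul_nonneg (sq_nonneg _) hw)]
      exact mul_le_of_le_one_right (mul_nonneg (sq_nonneg _) hw) (Real.abs_cos_le_one _)
    rw [hs.tsum_eq_zero_add, mul_add, ← tsum_mul_left]
    have hπ := Real.pi_ne_zero
    congr 1
    · simp only [regCoeff, cosWeight, if_true, Nat.cast_zero, mul_zero, zero_mul, Real.cos_zero]
      field_simp
      ring
    · refine tsum_congr fun n => ?_
      have hsg : ((-1 : ℝ) ^ (n + 1 + 1)) ^ 2 = 1 := by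
        rw [← pow_mul, mul_comm, pow_mul]; norm_num
      simp only [regCoeff, cosWeight, Nat.add_eq_zero_iff, one_ne_zero, and_false, if_false,
        one_pow, div_pow, mul_pow, hsg, Nat.cast_add, Nat.cast_one]
      field_simp
      ring
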